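/- arXiv:2512.14378 — 4 statements merged into one kernel-verified Lean document; each statement's English description precedes it below -/
import Mathlib

section
/- Let n ≥ 8 be divisible by 4, let H be a saturated orthogonal array OA(n,n−1,2,2), and let c_{del} be one fixed column of H. Then the sum of J₃(S)² over all unordered 3-subsets S of the remaining n−2 columns of H equals n²(n−2)(n−4)/6. -/
open Finset

lemma sum_psc_insert {α : Type*} [DecidableEq α] (x : α → ℤ) (a : α) (s : Finset α) (ha : a ∉ s)
    (k : ℕ) : ∑ S ∈ (insert a s).powersetCard (k+1), ∏ j ∈ S, x j
      = ∑ S ∈ s.powersetCard (k+1), ∏ j ∈ S, x j + x a * ∑ S ∈ s.powersetCard k, ∏ j ∈ S, x j := by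
  have hm : ∀ m, ∀ S ∈ s.powersetCard m, a ∉ S := fun m S hS h =>
    ha ((mem_powersetCard.1 hS).1 h)
  rw [powersetCard_succ_insert ha, sum_union, sum_image, mul_sum]
  · congr 1
    exact sum_congr rfl fun S hS => prod_insert (hm _ S hS)
  · intro S hS T hT h
    rw [← erase_insert (hm _ S hS), ← erase_insert (hm _ T hT)]
    exact congrArg (fun U => erase U a) h
  · rw [disjoint_left]
    intro S hS hT
    obtain ⟨T, _, rfl⟩ := mem_image.1 hT
    exact hm _ _ hS (mem_insert_self a T)

lemma newton3 {α : Type*} [DecidableEq α] (x : α → ℤ) (s : Finset α) :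
    ∑ S ∈ s.powersetCard 1, ∏ j ∈ S, x j = ∑ j ∈ s, x j ∧
    2 * ∑ S ∈ s.powersetCard 2, ∏ j ∈ S, x j = (∑ j ∈ s, x j)^2 - ∑ j ∈ s, x j ^ 2 ∧
    6 * ∑ S ∈ s.powersetCard 3, ∏ j ∈ S, x j
      = (∑ j ∈ s, x j)^3 - 3 * (∑ j ∈ s, x j) * (∑ j ∈ s, x j ^ 2) + 2 * ∑ j ∈ s, x j ^ 3 := by
  induction s using Finset.induction_on with
  | empty =>
    have h : ∀ m, powersetCard (m+1) (∅ : Finset α) = ∅ := fun m =>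
      powersetCard_eq_empty.2 (by simp)
    simp [h 0, h 1, h 2]
  | insert a s ha ih =>
    obtain ⟨h1, h2, h3⟩ := ih
    have e1 := sum_psc_insert x a s ha 0
    have e2 := sum_psc_insert x a s ha 1
    have e3 := sum_psc_insert x a s ha 2
    simp only [zero_add, Nat.reduceAdd, powersetCard_zero, sum_singleton, prod_empty] at e1 e2 e3
    simp only [sum_insert ha]
    rw [e1, e2, e3, h1]
    refine ⟨by ring, by linear_combination h2, ?_⟩
    linear_combination h3 + 3 * x a * h2

lemma row_orth (n : ℕ) (hn : 8 ≤ n)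
    (H : Fin n → Fin (n - 1) → ℤ)
    (hpm : ∀ i j, H i j = 1 ∨ H i j = -1)
    (hbal : ∀ j, ∑ i : Fin n, H i j = 0)
    (horth : ∀ j k : Fin (n - 1), j ≠ k → ∑ i : Fin n, H i j * H i k = 0)
    (i k : Fin n) : ∑ j, H i j * H k j = if i = k then (n:ℤ) - 1 else -1 := by
  have hsq : ∀ i j, H i j * H i j = 1 := fun i j => by rcases hpm i j with h | h <;> simp [h]
  let M : Matrix (Fin n) (Option (Fin (n-1))) ℚ := fun i j => j.elim 1 (fun j => (H i j : ℚ))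
  have hn0 : (n:ℚ) ≠ 0 := by positivity
  have h1 : ((n:ℚ)⁻¹ • M.transpose) * M = 1 := by
    rw [Matrix.smul_mul]
    ext a b
    rw [Matrix.smul_apply, Matrix.mul_apply, Matrix.one_apply]
    have hb : ∀ j, ∑ i : Fin n, (H i j : ℚ) = 0 := fun j => by exact_mod_cast hbal j
    rcases a with _ | a <;> rcases b with _ | b
    · simp [M, Matrix.transpose, hn0]
    · simp [M, Matrix.transpose, hb]
    · simp [M, Matrix.transpose, hb]
    · by_cases hab : a = b
      · subst hab
        have : ∀ i, (H i a : ℚ) * H i a = 1 := fun i => by exact_mod_cast hsq i a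
        simp [M, Matrix.transpose, this, hn0]
      · have : ∑ i, (H i a : ℚ) * H i b = 0 := by exact_mod_cast horth a b hab
        simp [M, Matrix.transpose, this, hab]
  have h2 := (Matrix.mul_eq_one_comm_of_card_eq _ _ _ (by simp; omega)).1 h1
  have h3 := congrFun (congrFun h2 i) k
  rw [Matrix.mul_smul, Matrix.smul_apply, Matrix.mul_apply, Matrix.one_apply, Fintype.sum_option] at h3
  replace h3 : (n:ℚ)⁻¹ * ((1:ℚ) * 1 + ∑ j, (H i j : ℚ) * H k j) = if i = k then 1 else 0 := h3
  have h4 : (1:ℚ) + ∑ j, (H i j : ℚ) * H k j = if i = k then (n:ℚ) else 0 := by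
    rw [inv_mul_eq_iff_eq_mul₀ hn0, mul_one] at h3
    rw [h3]; simp
  have h5 : (1:ℤ) + ∑ j, H i j * H k j = if i = k then (n:ℤ) else 0 := by
    split_ifs at h4 ⊢ <;> exact_mod_cast h4
  split_ifs at h5 ⊢ <;> linarith

/-- Deleting one fixed column from a saturated `OA(n, n-1, 2, 2)`,
the sum of `J₃(S)²` over all unordered 3-subsets of the remaining `n-2` columns
equals `n²(n-2)(n-4)/6`. -/
theorem sum_J3_sq_delete_one (n : ℕ) (hn : 8 ≤ n) (h4 : 4 ∣ n)
    (H : Fin n → Fin (n - 1) → ℤ)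
    (hpm : ∀ i j, H i j = 1 ∨ H i j = -1)
    (hbal : ∀ j, ∑ i : Fin n, H i j = 0)
    (horth : ∀ j k : Fin (n - 1), j ≠ k → ∑ i : Fin n, H i j * H i k = 0)
    (cdel : Fin (n - 1)) :
    ∑ S ∈ ((Finset.univ : Finset (Fin (n - 1))).erase cdel).powersetCard 3,
        (∑ i : Fin n, ∏ j ∈ S, H i j) ^ 2
      = (n : ℤ) ^ 2 * ((n : ℤ) - 2) * ((n : ℤ) - 4) / 6 := by
  have key : ∀ i k : Fin n,
      6 * ∑ S ∈ ((Finset.univ : Finset (Fin (n - 1))).erase cdel).powersetCard 3,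
        ∏ j ∈ S, (H i j * H k j) = 3 * ((n:ℤ) - 4) * (1 + H i cdel * H k cdel) +
          if i = k then ((n:ℤ)-2)^3 - (3*((n:ℤ)-2)-2)*((n:ℤ)-2) - 6 * ((n:ℤ)-4) else 0 := by
    intro i k
    have hx : ∀ j, H i j * H k j = 1 ∨ H i j * H k j = -1 := fun j => by
      rcases hpm i j with h | h <;> rcases hpm k j with h' | h' <;> simp [h, h']
    have hc : (((univ : Finset (Fin (n-1))).erase cdel).card : ℤ) = (n:ℤ) - 2 := by
      rw [card_erase_of_mem (mem_univ _), card_univ, Fintype.card_fin]; omega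
    have hp2 : ∑ j ∈ univ.erase cdel, (H i j * H k j)^2 = (n:ℤ) - 2 := by
      rw [← hc, card_eq_sum_ones, Nat.cast_sum]
      exact sum_congr rfl fun j _ => by rcases hx j with h | h <;> simp [h]
    have hp3 : ∑ j ∈ univ.erase cdel, (H i j * H k j)^3 = ∑ j ∈ univ.erase cdel, H i j * H k j :=
      sum_congr rfl fun j _ => by rcases hx j with h | h <;> simp [h]
    have hp1 := row_orth n hn H hpm hbal horth i k
    rw [← add_sum_erase _ _ (mem_univ cdel)] at hp1
    rw [(newton3 (fun j => H i j * H k j) _).2.2, hp2, hp3]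
    generalize ∑ j ∈ univ.erase cdel, H i j * H k j = p at *
    by_cases hik : i = k
    · subst hik
      have h1 : H i cdel * H i cdel = 1 := by rcases hpm i cdel with h | h <;> simp [h]
      simp only [if_true, h1] at hp1 ⊢
      obtain rfl : p = (n:ℤ) - 2 := by linarith
      ring
    · simp only [if_neg hik] at hp1 ⊢
      rcases hx cdel with h | h <;> rw [h] at hp1 ⊢
      · obtain rfl : p = -2 := by linarith
        ring
      · obtain rfl : p = 0 := by linarith
        ring
  have hexp : ∑ S ∈ ((Finset.univ : Finset (Fin (n - 1))).erase cdel).powersetCard 3,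
        (∑ i : Fin n, ∏ j ∈ S, H i j) ^ 2 = ∑ i, ∑ k,
        ∑ S ∈ ((Finset.univ : Finset (Fin (n - 1))).erase cdel).powersetCard 3,
        ∏ j ∈ S, (H i j * H k j) := by
    simp only [sq, sum_mul_sum, prod_mul_distrib]
    rw [sum_comm]
    exact sum_congr rfl fun i _ => sum_comm
  symm
  apply Int.ediv_eq_of_eq_mul_right (by norm_num)
  rw [hexp, mul_sum]
  simp only [mul_sum (s := (univ : Finset (Fin n))), key]
  simp only [sum_add_distrib, ← mul_sum, hbal, sum_ite_eq, mem_univ, if_true, sum_const, card_univ,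
    Fintype.card_fin, mul_zero, add_zero, nsmul_eq_mul]
  ring
end

section
/- Let n ≥ 12 be divisible by 4, let H be a saturated orthogonal array OA(n,n−1,2,2), let three distinct fixed columns a,b,c of H be removed, and let d be the nonnegative integer with 4d = #{rows i : a_i·b_i·c_i = +1}. Then the sum of J₃(S)² over all unordered 3-subsets S of the remaining n−4 columns equals n²(n−4)(n−8)/6 + 16d(n−4d). -/
open Finset

lemma aux_e2 {ι : Type*} [DecidableEq ι] (x : ι → ℤ) (hx : ∀ j, x j * x j = 1) (R : Finset ι) :
    2 * ∑ S ∈ R.powersetCard 2, ∏ j ∈ S, x j = (∑ j ∈ R, x j) ^ 2 - (R.card : ℤ) := by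
  induction R using Finset.induction_on with
  | empty => rw [Finset.powersetCard_eq_empty.2 (by simp)]; simp
  | insert r R hr ih =>
    rw [Finset.powersetCard_succ_insert hr, Finset.sum_union, Finset.sum_image, mul_add, ih,
      Finset.sum_insert hr, Finset.card_insert_of_notMem hr]
    · have h1 : ∑ S ∈ R.powersetCard 1, ∏ j ∈ insert r S, x j = x r * ∑ j ∈ R, x j := by
        rw [Finset.powersetCard_one, Finset.sum_map, Finset.mul_sum]
        refine Finset.sum_congr rfl fun j hj => ?_
        have : r ∉ ({j} : Finset ι) := by
          rw [Finset.mem_singleton]; rintro rfl; exact hr hj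
        simp [Finset.prod_insert this]
      rw [h1]
      push_cast
      linear_combination (-1) * hx r
    · intro S hS T hT h
      have hS' : r ∉ S := fun h => hr ((Finset.mem_powersetCard.1 hS).1 h)
      have hT' : r ∉ T := fun h => hr ((Finset.mem_powersetCard.1 hT).1 h)
      rw [← Finset.erase_insert hS', ← Finset.erase_insert hT', h]
    · rw [Finset.disjoint_left]
      intro S hS hS2
      obtain ⟨T, _, rfl⟩ := Finset.mem_image.1 hS2
      exact hr ((Finset.mem_powersetCard.1 hS).1 (Finset.mem_insert_self _ _))

lemma aux_e3 {ι : Type*} [DecidableEq ι] (x : ι → ℤ) (hx : ∀ j, x j * x j = 1) (R : Finset ι) :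
    6 * ∑ S ∈ R.powersetCard 3, ∏ j ∈ S, x j
      = (∑ j ∈ R, x j) ^ 3 - (3 * (R.card : ℤ) - 2) * ∑ j ∈ R, x j := by
  induction R using Finset.induction_on with
  | empty => rw [Finset.powersetCard_eq_empty.2 (by simp)]; simp
  | insert r R hr ih =>
    rw [Finset.powersetCard_succ_insert hr, Finset.sum_union, Finset.sum_image, mul_add, ih,
      Finset.sum_insert hr, Finset.card_insert_of_notMem hr]
    · have h1 : ∑ S ∈ R.powersetCard 2, ∏ j ∈ insert r S, x j
          = x r * ∑ S ∈ R.powersetCard 2, ∏ j ∈ S, x j := by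
        rw [Finset.mul_sum]
        refine Finset.sum_congr rfl fun S hS => ?_
        exact Finset.prod_insert fun h => hr ((Finset.mem_powersetCard.1 hS).1 h)
      rw [h1]
      push_cast
      have h2 := aux_e2 x hx R
      linear_combination 3 * x r * h2 - (3 * (∑ j ∈ R, x j) + x r) * hx r
    · intro S hS T hT h
      have hS' : r ∉ S := fun h => hr ((Finset.mem_powersetCard.1 hS).1 h)
      have hT' : r ∉ T := fun h => hr ((Finset.mem_powersetCard.1 hT).1 h)
      rw [← Finset.erase_insert hS', ← Finset.erase_insert hT', h]
    · rw [Finset.disjoint_left]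
      intro S hS hS2
      obtain ⟨T, _, rfl⟩ := Finset.mem_image.1 hS2
      exact hr ((Finset.mem_powersetCard.1 hS).1 (Finset.mem_insert_self _ _))

lemma aux_gram (n : ℕ) (hn : 12 ≤ n)
    (H : Fin n → Fin (n - 1) → ℤ)
    (hsq : ∀ i j, H i j * H i j = 1)
    (hbal : ∀ j, ∑ i : Fin n, H i j = 0)
    (horth : ∀ j k : Fin (n - 1), j ≠ k → ∑ i : Fin n, H i j * H i k = 0) (i k : Fin n) :
    ∑ j, H i j * H k j = (if i = k then (n : ℤ) else 0) - 1 := by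
  have hn0 : (n : ℚ) ≠ 0 := by
    have : n ≠ 0 := by omega
    exact_mod_cast this
  let M : Matrix (Fin n) (Option (Fin (n - 1))) ℚ :=
    Matrix.of fun i o => o.elim 1 (fun j => (H i j : ℚ))
  let N : Matrix (Option (Fin (n - 1))) (Fin n) ℚ := (n : ℚ)⁻¹ • M.transpose
  have hNM : N * M = 1 := by
    ext o p
    simp only [N, Matrix.smul_apply, Matrix.mul_apply, Matrix.transpose_apply, M,
      Matrix.of_apply, smul_eq_mul, mul_assoc, ← Finset.mul_sum]
    rcases o with _ | o <;> rcases p with _ | p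
    · simp [hn0]
    · have := hbal p
      have h : ∑ i, (H i p : ℚ) = 0 := by exact_mod_cast this
      simp [h]
    · have := hbal o
      have h : ∑ i, (H i o : ℚ) = 0 := by exact_mod_cast this
      simp [h]
    · by_cases hop : o = p
      · subst hop
        have h : ∀ i, (H i o : ℚ) * H i o = 1 := fun i => by exact_mod_cast hsq i o
        simp [h, hn0]
      · have h : ∑ i, (H i o : ℚ) * H i p = 0 := by exact_mod_cast horth o p hop
        simp [h, hop]
  have hMN : M * N = 1 := by
    refine (Matrix.mul_eq_one_comm_of_card_eq _ _ _ ?_).1 hNM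
    simp; omega
  have h := congrFun (congrFun hMN i) k
  simp only [N, Matrix.smul_apply, Matrix.mul_apply, Matrix.transpose_apply, M,
      Matrix.of_apply, smul_eq_mul, Fintype.sum_option, Matrix.one_apply, Option.elim,
      mul_left_comm _ (n : ℚ)⁻¹ _, ← Finset.mul_sum, ← mul_add] at h
  rw [inv_mul_eq_iff_eq_mul₀ hn0] at h
  have h' : ((∑ j, H i j * H k j : ℤ) : ℚ) = (((if i = k then (n : ℤ) else 0) - 1 : ℤ) : ℚ) := by
    push_cast
    split_ifs at h ⊢ <;> push_cast <;> linarith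
  exact_mod_cast h'

lemma aux_dsum {n : ℕ} (f : Fin n → ℤ) : ∑ i, ∑ k, f i * f k = (∑ i, f i) ^ 2 := by
  rw [sq, Finset.sum_mul_sum]

theorem sum_J3_sq_delete_three (n : ℕ) (hn : 12 ≤ n) (h4 : 4 ∣ n)
    (H : Fin n → Fin (n - 1) → ℤ)
    (hpm : ∀ i j, H i j = 1 ∨ H i j = -1)
    (hbal : ∀ j, ∑ i : Fin n, H i j = 0)
    (horth : ∀ j k : Fin (n - 1), j ≠ k → ∑ i : Fin n, H i j * H i k = 0)
    (a b c : Fin (n - 1)) (hab : a ≠ b) (hac : a ≠ c) (hbc : b ≠ c)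
    (d : ℕ)
    (hd : 4 * d =
      ((Finset.univ : Finset (Fin n)).filter (fun i => H i a * H i b * H i c = 1)).card) :
    ∑ S ∈ ((Finset.univ : Finset (Fin (n - 1))) \ {a, b, c}).powersetCard 3,
        (∑ i : Fin n, ∏ j ∈ S, H i j) ^ 2
      = (n : ℤ) ^ 2 * ((n : ℤ) - 4) * ((n : ℤ) - 8) / 6
        + 16 * (d : ℤ) * ((n : ℤ) - 4 * (d : ℤ)) := by
  have hsq : ∀ i j, H i j * H i j = 1 := fun i j => by rcases hpm i j with h | h <;> simp [h]
  have hJ : ∑ i, H i a * H i b * H i c = 8 * (d : ℤ) - n := by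
    have h1 : ∀ i, H i a * H i b * H i c
        = 2 * (if H i a * H i b * H i c = 1 then (1 : ℤ) else 0) - 1 := fun i => by
      rcases hpm i a with h | h <;> rcases hpm i b with h' | h' <;>
        rcases hpm i c with h'' | h'' <;> simp [h, h', h'']
    have hd' : (4 * d : ℤ) = ∑ i, (if H i a * H i b * H i c = 1 then (1 : ℤ) else 0) := by
      rw [Finset.sum_boole, ← hd]; push_cast; rfl
    rw [Finset.sum_congr rfl fun i _ => h1 i, Finset.sum_sub_distrib, ← Finset.mul_sum, ← hd']
    simp; ring
  set R := (Finset.univ : Finset (Fin (n - 1))) \ {a, b, c} with hR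
  have hc3 : ({a, b, c} : Finset (Fin (n - 1))).card = 3 := by
    rw [Finset.card_eq_three]; exact ⟨a, b, c, hab, hac, hbc, rfl⟩
  have hRc : (R.card : ℤ) = n - 4 := by
    rw [hR, Finset.card_sdiff_of_subset (Finset.subset_univ _), hc3]
    simp; omega
  have hg : ∀ i k, ∑ j ∈ R, H i j * H k j = (if i = k then (n : ℤ) else 0) - 1
      - (H i a * H k a + H i b * H k b + H i c * H k c) := fun i k => by
    have h1 := Finset.sum_sdiff (f := fun j => H i j * H k j)
      (Finset.subset_univ ({a, b, c} : Finset (Fin (n - 1))))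
    rw [aux_gram n hn H hsq hbal horth i k, Finset.sum_insert (by simp [hab, hac]),
      Finset.sum_insert (by simp [hbc]), Finset.sum_singleton] at h1
    rw [← h1]; ring
  have key : 6 * ∑ S ∈ R.powersetCard 3, (∑ i : Fin n, ∏ j ∈ S, H i j) ^ 2
      = ∑ i, ∑ k, ((∑ j ∈ R, H i j * H k j) ^ 3
        - (3 * (n : ℤ) - 14) * ∑ j ∈ R, H i j * H k j) := by
    have h1 : ∀ S ∈ R.powersetCard 3, (∑ i : Fin n, ∏ j ∈ S, H i j) ^ 2
        = ∑ i, ∑ k, ∏ j ∈ S, (H i j * H k j) := fun S _ => by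
      simp only [Finset.prod_mul_distrib]
      rw [aux_dsum]
    rw [Finset.sum_congr rfl h1, Finset.sum_comm, Finset.mul_sum]
    refine Finset.sum_congr rfl fun i _ => ?_
    rw [Finset.sum_comm, Finset.mul_sum]
    refine Finset.sum_congr rfl fun k _ => ?_
    rw [aux_e3 (fun j => H i j * H k j)
      (fun j => by linear_combination H k j * H k j * hsq i j + hsq k j), hRc]
    ring
  have key2 : ∀ i k, ((∑ j ∈ R, H i j * H k j) ^ 3
        - (3 * (n : ℤ) - 14) * ∑ j ∈ R, H i j * H k j)
      = (if i = k then (n : ℤ) * ((n : ℤ) ^ 2 - 15 * n + 62) else 0)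
        + (3 * (n : ℤ) - 24)
        + (3 * (n : ℤ) - 24) * (H i a * H k a)
        + (3 * (n : ℤ) - 24) * (H i b * H k b)
        + (3 * (n : ℤ) - 24) * (H i c * H k c)
        - 6 * ((H i a * H i b) * (H k a * H k b))
        - 6 * ((H i a * H i c) * (H k a * H k c))
        - 6 * ((H i b * H i c) * (H k b * H k c))
        - 6 * ((H i a * H i b * H i c) * (H k a * H k b * H k c)) := fun i k => by
    rw [hg]
    by_cases hik : i = k
    · subst hik
      rcases hpm i a with h | h <;> rcases hpm i b with h' | h' <;>
        rcases hpm i c with h'' | h'' <;> simp [h, h', h''] <;> ring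
    · simp only [hik, if_false]
      rcases hpm i a with h | h <;> rcases hpm i b with h' | h' <;>
        rcases hpm i c with h'' | h'' <;> rcases hpm k a with g | g <;>
        rcases hpm k b with g' | g' <;>
        rcases hpm k c with g'' | g'' <;> simp only [h, h', h'', g, g', g''] <;> ring
  have hfin : 6 * ∑ S ∈ R.powersetCard 3, (∑ i : Fin n, ∏ j ∈ S, H i j) ^ 2
      = (n : ℤ) ^ 2 * ((n : ℤ) - 4) * ((n : ℤ) - 8)
        + 6 * (16 * (d : ℤ) * ((n : ℤ) - 4 * (d : ℤ))) := by
    rw [key]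
    simp only [key2, Finset.sum_add_distrib, Finset.sum_sub_distrib, ← Finset.mul_sum]
    simp only [← Finset.mul_sum, ← Finset.sum_mul, hJ, hbal, horth a b hab, horth a c hac,
      horth b c hbc]
    simp
    ring
  omega
end

section
/- Let n ≥ 12 be divisible by 4, let H be a saturated orthogonal array OA(n,n−1,2,2), let three distinct fixed columns a,b,c of H be removed, and let d be the nonnegative integer with 4d = #{rows i : a_i·b_i·c_i = +1}. Then the sum of J₄(S)² over all unordered 4-subsets S of the remaining n−4 columns equals n²(n−4)(n²−15n+62)/24 − 16d(n−4d). -/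
open Finset

theorem aux_E_insert {ι : Type*} [DecidableEq ι] (f : ι → ℤ) (x : ι) (R : Finset ι)
    (hx : x ∉ R) (k : ℕ) :
    ∑ S ∈ (insert x R).powersetCard (k+1), ∏ j ∈ S, f j
      = ∑ S ∈ R.powersetCard (k+1), ∏ j ∈ S, f j
        + f x * ∑ S ∈ R.powersetCard k, ∏ j ∈ S, f j := by
  have hn : ∀ S ∈ R.powersetCard k, x ∉ S := fun S hS h =>
    hx ((Finset.mem_powersetCard.1 hS).1 h)
  rw [Finset.powersetCard_succ_insert hx, Finset.sum_union, Finset.sum_image, Finset.mul_sum]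
  · congr 1
    refine Finset.sum_congr rfl fun S hS => ?_
    rw [Finset.prod_insert (hn S hS)]
  · intro S hS T hT h
    have := congrArg (fun U => Finset.erase U x) h
    simpa [Finset.erase_insert (hn S hS), Finset.erase_insert (hn T hT)] using this
  · rw [Finset.disjoint_left]
    intro S hS hS'
    obtain ⟨T, _, rfl⟩ := Finset.mem_image.1 hS'
    exact hx ((Finset.mem_powersetCard.1 hS).1 (Finset.mem_insert_self _ _))

theorem aux_newton {ι : Type*} [DecidableEq ι] (f : ι → ℤ) (hf : ∀ j, f j = 1 ∨ f j = -1)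
    (R : Finset ι) :
    (∑ S ∈ R.powersetCard 1, ∏ j ∈ S, f j = ∑ j ∈ R, f j) ∧
    (2 * ∑ S ∈ R.powersetCard 2, ∏ j ∈ S, f j = (∑ j ∈ R, f j)^2 - R.card) ∧
    (6 * ∑ S ∈ R.powersetCard 3, ∏ j ∈ S, f j
      = (∑ j ∈ R, f j)^3 - 3 * R.card * (∑ j ∈ R, f j) + 2 * (∑ j ∈ R, f j)) ∧
    (24 * ∑ S ∈ R.powersetCard 4, ∏ j ∈ S, f j
      = (∑ j ∈ R, f j)^4 + (8 - 6 * R.card) * (∑ j ∈ R, f j)^2 + 3 * (R.card:ℤ)^2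
        - 6 * R.card) := by
  induction R using Finset.induction_on with
  | empty => 
    have h : ∀ k : ℕ, 0 < k → (∅ : Finset ι).powersetCard k = ∅ := fun k hk =>
      Finset.powersetCard_eq_empty.2 (by simpa using hk)
    simp [h 1, h 2, h 3, h 4]
  | insert x R hx ih =>
    obtain ⟨h1, h2, h3, h4⟩ := ih
    have e1 := aux_E_insert f x R hx 0
    have e2 := aux_E_insert f x R hx 1
    have e3 := aux_E_insert f x R hx 2
    have e4 := aux_E_insert f x R hx 3
    simp only [Nat.reduceAdd, zero_add] at e1 e2 e3 e4
    rw [e1, e2, e3, e4, Finset.sum_insert hx, Finset.card_insert_of_notMem hx]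
    simp only [Finset.powersetCard_zero, Finset.sum_singleton, Finset.prod_empty]
    push_cast
    generalize (∑ S ∈ R.powersetCard 1, ∏ j ∈ S, f j) = E1 at *
    generalize (∑ S ∈ R.powersetCard 2, ∏ j ∈ S, f j) = E2 at *
    generalize (∑ S ∈ R.powersetCard 3, ∏ j ∈ S, f j) = E3 at *
    generalize (∑ S ∈ R.powersetCard 4, ∏ j ∈ S, f j) = E4 at *
    generalize (∑ j ∈ R, f j) = p at *
    generalize (R.card : ℤ) = N at *
    rcases hf x with h | h <;> rw [h] <;> refine ⟨?_, ?_, ?_, ?_⟩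
    · linear_combination h1
    · linear_combination h2 + 2 * h1
    · linear_combination h3 + 3 * h2
    · linear_combination h4 + 4 * h3
    · linear_combination h1
    · linear_combination h2 - 2 * h1
    · linear_combination h3 - 3 * h2
    · linear_combination h4 - 4 * h3

theorem aux_row (n : ℕ) (hn : 12 ≤ n)
    (H : Fin n → Fin (n - 1) → ℤ)
    (hpm : ∀ i j, H i j = 1 ∨ H i j = -1)
    (hbal : ∀ j, ∑ i : Fin n, H i j = 0)
    (horth : ∀ j k : Fin (n - 1), j ≠ k → ∑ i : Fin n, H i j * H i k = 0)
    (i k : Fin n) :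
    1 + ∑ j, H i j * H k j = if i = k then (n : ℤ) else 0 := by
  have hn0 : (n : ℚ) ≠ 0 := by
    have : n ≠ 0 := by omega
    exact_mod_cast this
  let A : Matrix (Fin n) (Option (Fin (n-1))) ℚ :=
    fun i o => o.elim 1 (fun j => (H i j : ℚ))
  have hsq : ∀ i j, H i j * H i j = 1 := by
    intro i j; rcases hpm i j with h | h <;> rw [h] <;> norm_num
  have hA : ((n : ℚ)⁻¹ • A.transpose) * A = 1 := by
    ext o o'
    rw [Matrix.smul_mul, Matrix.smul_apply, Matrix.mul_apply, Matrix.one_apply]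
    simp only [Matrix.transpose_apply, smul_eq_mul]
    rcases o with _ | j <;> rcases o' with _ | j' <;> simp only [A, Option.elim]
    · simp [hn0]
    · have := hbal j'
      have h : ∑ i, (H i j' : ℚ) = 0 := by exact_mod_cast this
      simp [h]
    · have := hbal j
      have h : ∑ i, (H i j : ℚ) = 0 := by exact_mod_cast this
      simp [h]
    · by_cases hj : j = j'
      · subst hj
        have h : ∀ i, (H i j : ℚ) * H i j = 1 := fun i => by exact_mod_cast hsq i j
        simp [h, hn0]
      · have h : ∑ i, (H i j : ℚ) * H i j' = 0 := by exact_mod_cast horth j j' hj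
        simp [h, hj]
  have hcard : Fintype.card (Option (Fin (n-1))) = Fintype.card (Fin n) := by
    simp; omega
  have hB := (Matrix.mul_eq_one_comm_of_card_eq _ _ _ hcard).1 hA
  have h := congrFun (congrFun hB i) k
  rw [Matrix.mul_smul, Matrix.smul_apply, Matrix.mul_apply, Matrix.one_apply,
    Fintype.sum_option] at h
  simp only [Matrix.transpose_apply, smul_eq_mul] at h
  simp only [A, Option.elim] at h
  have h' : (1 : ℚ) + ∑ j, (H i j : ℚ) * H k j = if i = k then (n : ℚ) else 0 := by
    have := congrArg (fun z => (n : ℚ) * z) h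
    simp only [← mul_assoc, mul_inv_cancel₀ hn0] at this
    simpa using this
  split_ifs at h' ⊢ <;> exact_mod_cast h'

theorem aux_P (N u v w : ℤ) (hu : u = 1 ∨ u = -1) (hv : v = 1 ∨ v = -1) (hw : w = 1 ∨ w = -1) :
    (1+u+v+w)^4 + (8 - 6*N) * (1+u+v+w)^2 + 3*N^2 - 6*N
    = (40 + 4 * (8-6*N) + 3*N^2 - 6*N)
      + (32 + 2 * (8-6*N)) * (u + v + w + u*v + u*w + v*w) + 24 * (u*v*w) := by
  rcases hu with rfl | rfl <;> rcases hv with rfl | rfl <;> rcases hw with rfl | rfl <;> ring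

theorem aux_sq {n : ℕ} (f : Fin n → ℤ) : ∑ i, ∑ k, f i * f k = (∑ i, f i)^2 := by
  rw [sq, Finset.sum_mul_sum]

/-- Deleting three distinct fixed columns `a, b, c` from a saturated
`OA(n, n-1, 2, 2)`, with `4d` the number of rows `i` with `aᵢ·bᵢ·cᵢ = +1`, the sum of
`J₄(S)²` over all unordered 4-subsets of the remaining `n-4` columns equals
`n²(n-4)(n²-15n+62)/24 - 16d(n-4d)`. -/
theorem sum_J4_sq_delete_three (n : ℕ) (hn : 12 ≤ n) (h4 : 4 ∣ n)
    (H : Fin n → Fin (n - 1) → ℤ)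
    (hpm : ∀ i j, H i j = 1 ∨ H i j = -1)
    (hbal : ∀ j, ∑ i : Fin n, H i j = 0)
    (horth : ∀ j k : Fin (n - 1), j ≠ k → ∑ i : Fin n, H i j * H i k = 0)
    (a b c : Fin (n - 1)) (hab : a ≠ b) (hac : a ≠ c) (hbc : b ≠ c)
    (d : ℕ)
    (hd : 4 * d =
      ((Finset.univ : Finset (Fin n)).filter (fun i => H i a * H i b * H i c = 1)).card) :
    ∑ S ∈ ((Finset.univ : Finset (Fin (n - 1))) \ {a, b, c}).powersetCard 4,
        (∑ i : Fin n, ∏ j ∈ S, H i j) ^ 2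
      = (n : ℤ) ^ 2 * ((n : ℤ) - 4) * ((n : ℤ) ^ 2 - 15 * (n : ℤ) + 62) / 24
        - 16 * (d : ℤ) * ((n : ℤ) - 4 * (d : ℤ)) := by
  have hrow := aux_row n hn H hpm hbal horth
  have hpm2 : ∀ i k j, H i j * H k j = 1 ∨ H i j * H k j = -1 := by
    intro i k j
    rcases hpm i j with h | h <;> rcases hpm k j with h' | h' <;> rw [h, h'] <;> norm_num
  set R : Finset (Fin (n-1)) := (Finset.univ : Finset (Fin (n - 1))) \ {a, b, c} with hR
  have hc3 : ({a, b, c} : Finset (Fin (n-1))).card = 3 := Finset.card_eq_three.2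
    ⟨a, b, c, hab, hac, hbc, rfl⟩
  have hRc : (R.card : ℤ) = (n : ℤ) - 4 := by
    have : R.card = n - 4 := by
      rw [hR, Finset.card_sdiff_of_subset (Finset.subset_univ _), hc3]
      simp; omega
    omega
  -- the sum over the remaining columns
  have hp : ∀ i k, ∑ j ∈ R, H i j * H k j = (if i = k then (n : ℤ) else 0)
      - (1 + H i a * H k a + H i b * H k b + H i c * H k c) := by
    intro i k
    have h1 := Finset.sum_sdiff (f := fun j => H i j * H k j)
      (Finset.subset_univ ({a, b, c} : Finset (Fin (n-1))))
    have h2 : ∑ j ∈ ({a, b, c} : Finset (Fin (n-1))), H i j * H k j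
        = H i a * H k a + (H i b * H k b + H i c * H k c) := by
      rw [Finset.sum_insert (by simp [hab, hac]), Finset.sum_insert (by simp [hbc]),
        Finset.sum_singleton]
    rw [h2] at h1
    linarith [hrow i k]
  have hswap : ∑ S ∈ R.powersetCard 4, (∑ i : Fin n, ∏ j ∈ S, H i j) ^ 2
      = ∑ i : Fin n, ∑ k : Fin n, ∑ S ∈ R.powersetCard 4, ∏ j ∈ S, (H i j * H k j) := by
    simp only [← aux_sq, Finset.prod_mul_distrib]
    rw [Finset.sum_comm]
    refine Finset.sum_congr rfl fun i _ => ?_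
    rw [Finset.sum_comm]
  have hkey : ∀ i k, 24 * ∑ S ∈ R.powersetCard 4, ∏ j ∈ S, (H i j * H k j)
      = (40 + 4 * (8-6*((n:ℤ)-4)) + 3*((n:ℤ)-4)^2 - 6*((n:ℤ)-4))
      + (32 + 2 * (8-6*((n:ℤ)-4))) * (H i a * H k a + H i b * H k b + H i c * H k c
        + (H i a * H i b) * (H k a * H k b) + (H i a * H i c) * (H k a * H k c)
        + (H i b * H i c) * (H k b * H k c))
      + 24 * ((H i a * H i b * H i c) * (H k a * H k b * H k c))
      + (if i = k then ((n:ℤ)-4)^4 + (8 - 6 * ((n:ℤ)-4)) * ((n:ℤ)-4)^2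
          - (4^4 + (8 - 6 * ((n:ℤ)-4)) * 4^2) else 0) := by
    intro i k
    have h1 := (aux_newton (fun j => H i j * H k j) (hpm2 i k) R).2.2.2
    rw [hp, hRc] at h1
    have h2 := aux_P ((n:ℤ)-4) _ _ _ (hpm2 i k a) (hpm2 i k b) (hpm2 i k c)
    by_cases hik : i = k
    · subst hik
      have hsq : ∀ j, H i j * H i j = 1 := by
        intro j; rcases hpm i j with h | h <;> rw [h] <;> norm_num
      simp only [if_true] at h1 ⊢
      rw [hsq, hsq, hsq] at h1 h2
      rw [h1, hsq, hsq, hsq]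
      have e1 : (H i a * H i b) * (H i a * H i b) = 1 := by
        linear_combination (H i b * H i b) * hsq a + hsq b
      have e2 : (H i a * H i c) * (H i a * H i c) = 1 := by
        linear_combination (H i c * H i c) * hsq a + hsq c
      have e3 : (H i b * H i c) * (H i b * H i c) = 1 := by
        linear_combination (H i c * H i c) * hsq b + hsq c
      have e4 : (H i a * H i b * H i c) * (H i a * H i b * H i c) = 1 := by
        linear_combination (H i c * H i c) * e1 + hsq c
      rw [e1, e2, e3, e4]
      ring
    · simp only [if_neg hik] at h1 ⊢
      rw [h1]
      linear_combination h2
  have hJ : ∑ i, H i a * H i b * H i c = 8 * (d:ℤ) - n := by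
    have h1 : ∀ i, H i a * H i b * H i c = 2 * (if H i a * H i b * H i c = 1 then 1 else 0) - 1 := by
      intro i
      rcases hpm i a with h | h <;> rcases hpm i b with h' | h' <;>
        rcases hpm i c with h'' | h'' <;> rw [h, h', h''] <;> norm_num
    rw [Finset.sum_congr rfl fun i _ => h1 i, Finset.sum_sub_distrib, ← Finset.mul_sum,
      Finset.sum_boole, ← hd]
    simp
    ring
  have hmain : 24 * ∑ S ∈ R.powersetCard 4, (∑ i : Fin n, ∏ j ∈ S, H i j) ^ 2
      = (n : ℤ) ^ 2 * ((n : ℤ) - 4) * ((n : ℤ) ^ 2 - 15 * (n : ℤ) + 62)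
        - 24 * (16 * (d : ℤ) * ((n : ℤ) - 4 * (d : ℤ))) := by
    rw [hswap]
    simp only [Finset.mul_sum (a := (24:ℤ)) (s := (Finset.univ : Finset (Fin n)))]
    simp only [hkey, Finset.sum_add_distrib, ← Finset.mul_sum]
    have q := aux_sq (fun i => H i a * H i b * H i c)
    have q1 := aux_sq (fun i => H i a * H i b)
    have q2 := aux_sq (fun i => H i a * H i c)
    have q3 := aux_sq (fun i => H i b * H i c)
    have q4 := aux_sq (fun i => H i a)
    have q5 := aux_sq (fun i => H i b)
    have q6 := aux_sq (fun i => H i c)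
    simp only [← Finset.mul_sum, hbal, horth a b hab, horth a c hac, horth b c hbc, hJ]
      at q q1 q2 q3 q4 q5 q6 ⊢
    rw [q]
    simp
    ring
  have hX : (n : ℤ) ^ 2 * ((n : ℤ) - 4) * ((n : ℤ) ^ 2 - 15 * (n : ℤ) + 62)
    = 24 * (∑ S ∈ R.powersetCard 4, (∑ i : Fin n, ∏ j ∈ S, H i j) ^ 2
      + 16 * (d : ℤ) * ((n : ℤ) - 4 * (d : ℤ))) := by linarith
  rw [hX, Int.mul_ediv_cancel_left _ (by norm_num)]
  ring
end

section
/- Let n ≥ 8 be divisible by 4, let H be a saturated orthogonal array OA(n,n−1,2,2), and let H' be the n×(n−3) design obtained from H by deleting two distinct fixed columns. Let X be the n × ((n−3)(n−2)/2) two-level design whose columns are the n−3 columns of H' together with the interaction columns of all (n−3 choose 2) unordered pairs of distinct columns of H'. Then E(s²)(X) = n²(n−5)/((n−3)(n−1)), and X is E(s²)-optimal: E(s²)(X) ≤ E(s²)(Y) for every n × ((n−3)(n−2)/2) balanced two-level design Y. -/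
open Finset

/-- The `E(s²)` value of an `n × m` two-level design `X` (columns indexed by `ι`,
`m = card ι`): the average of the squared off-diagonal entries of `XᵀX`. -/
noncomputable def Es2 {n : ℕ} {ι : Type} [Fintype ι] [DecidableEq ι]
    (X : Fin n → ι → ℚ) : ℚ :=
  (∑ i : ι, ∑ j : ι, if i ≠ j then (∑ r : Fin n, X r i * X r j) ^ 2 else 0) /
    ((Fintype.card ι : ℚ) * ((Fintype.card ι : ℚ) - 1))

lemma pair_sum_aux {K : Type} [Fintype K] [DecidableEq K] {N : ℕ} (g : K → Fin N)
    (hg : Function.Injective g) [Fintype {p : K × K // g p.1 < g p.2}] (f : K → ℚ) :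
    2 * ∑ p : {p : K × K // g p.1 < g p.2}, f p.1.1 * f p.1.2 = (∑ k, f k) ^ 2 - ∑ k, f k ^ 2 := by
  have h1 : ∑ p : {p : K × K // g p.1 < g p.2}, f p.1.1 * f p.1.2
      = ∑ x, ∑ y, if g x < g y then f x * f y else 0 := by
    rw [← Finset.sum_subtype (Finset.univ.filter (fun p : K × K => g p.1 < g p.2))
      (fun p => by simp) (fun p : K × K => f p.1 * f p.2), Finset.sum_filter,
      Fintype.sum_prod_type]
  have h2 : ∑ x, ∑ y, (if g x < g y then f x * f y else 0)
      = ∑ x, ∑ y, if g y < g x then f x * f y else 0 := by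
    rw [Finset.sum_comm]
    simp only [mul_comm]
  have h3 : ∑ k, f k ^ 2 = ∑ x, ∑ y, if x = y then f x * f y else 0 := by
    simp [pow_two]
  rw [two_mul]
  nth_rewrite 2 [h1]
  rw [h2, h1, eq_sub_iff_add_eq, h3, pow_two, Finset.sum_mul_sum, ← Finset.sum_add_distrib,
    ← Finset.sum_add_distrib]
  refine Finset.sum_congr rfl fun x _ => ?_
  rw [← Finset.sum_add_distrib, ← Finset.sum_add_distrib]
  refine Finset.sum_congr rfl fun y _ => ?_
  rcases lt_trichotomy (g x) (g y) with h | h | h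
  · have : x ≠ y := fun e => by simp [e] at h
    simp [h, h.not_gt, this]
  · have := hg h
    simp [this]
  · have : x ≠ y := fun e => by simp [e] at h
    simp [h, h.not_gt, this]

lemma pm_sq {x : ℚ} (h : x = 1 ∨ x = -1) : x * x = 1 := by
  rcases h with h | h <;> simp [h]

lemma off_sum {K : Type} [Fintype K] [DecidableEq K] (F : K → K → ℚ) :
    ∑ i, ∑ j, (if i ≠ j then F i j else 0) = ∑ i, ∑ j, F i j - ∑ i, F i i := by
  rw [← Finset.sum_sub_distrib]
  refine Finset.sum_congr rfl fun i _ => ?_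
  have : ∀ j, (if i ≠ j then F i j else 0) = F i j - if i = j then F i j else 0 := by
    intro j; by_cases h : i = j <;> simp [h]
  simp only [this, Finset.sum_sub_distrib]
  simp

lemma Es2_num {n : ℕ} {ι : Type} [Fintype ι] [DecidableEq ι] (Z : Fin n → ι → ℚ)
    (hZ : ∀ r i, Z r i = 1 ∨ Z r i = -1) (hb : ∀ i, ∑ r, Z r i = 0) (c : ℚ) :
    (∑ i : ι, ∑ j : ι, if i ≠ j then (∑ r : Fin n, Z r i * Z r j) ^ 2 else 0)
    = (∑ r : Fin n, ∑ s : Fin n, if r ≠ s then (∑ i, Z r i * Z s i + c) ^ 2 else 0)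
      + 2 * c * n * (Fintype.card ι : ℚ) - n * (n - 1) * c ^ 2 + n * (Fintype.card ι : ℚ) ^ 2
      - (Fintype.card ι : ℚ) * n ^ 2 := by
  rw [off_sum, off_sum]
  have hd1 : ∀ i, ∑ r : Fin n, Z r i * Z r i = n := fun i => by
    simp [pm_sq (hZ _ i)]
  have hd2 : ∀ r, ∑ i, Z r i * Z r i = (Fintype.card ι : ℚ) := fun i => by
    simp [pm_sq (hZ i _)]
  simp only [hd1, hd2]
  have hsw : ∑ i, ∑ j, (∑ r : Fin n, Z r i * Z r j) ^ 2
      = ∑ r : Fin n, ∑ s : Fin n, (∑ i, Z r i * Z s i) ^ 2 := by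
    have e1 : ∀ i j, (∑ r : Fin n, Z r i * Z r j) ^ 2
        = ∑ r : Fin n, ∑ s : Fin n, (Z r i * Z s i) * (Z r j * Z s j) := by
      intro i j
      rw [pow_two, Finset.sum_mul_sum]
      refine Finset.sum_congr rfl fun _ _ => Finset.sum_congr rfl fun _ _ => by ring
    have e2 : ∀ r s : Fin n, (∑ i, Z r i * Z s i) ^ 2
        = ∑ i, ∑ j, (Z r i * Z s i) * (Z r j * Z s j) := by
      intro r s
      rw [pow_two, Finset.sum_mul_sum]
    simp only [e1, e2]
    rw [← Fintype.sum_prod_type', ← Fintype.sum_prod_type' (f := fun r s : Fin n =>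
      ∑ i, ∑ j, (Z r i * Z s i) * (Z r j * Z s j))]
    simp only [← Fintype.sum_prod_type']
    exact Fintype.sum_equiv (Equiv.prodComm _ _) _ _ (fun _ => rfl)
  have hz : ∑ r : Fin n, ∑ s : Fin n, ∑ i, Z r i * Z s i = 0 := by
    refine Finset.sum_eq_zero fun r _ => ?_
    rw [Finset.sum_comm]
    refine Finset.sum_eq_zero fun i _ => ?_
    rw [← Finset.mul_sum, hb, mul_zero]
  have hexp : ∑ r : Fin n, ∑ s : Fin n, (∑ i, Z r i * Z s i + c) ^ 2
      = ∑ r : Fin n, ∑ s : Fin n, (∑ i, Z r i * Z s i) ^ 2 + n * n * c ^ 2 := by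
    simp only [add_sq, Finset.sum_add_distrib, ← Finset.sum_mul, ← Finset.mul_sum, hz]
    simp
    ring
  rw [hsw, hexp]
  simp
  ring

lemma odd_row {ι : Type} [Fintype ι] (f : ι → ℚ) (hf : ∀ i, f i = 1 ∨ f i = -1) :
    ∃ k : ℤ, ∑ i, f i = Fintype.card ι - 2 * k := by
  have : ∀ i, ∃ k : ℤ, f i = 1 - 2 * k := fun i => by
    rcases hf i with h | h
    · exact ⟨0, by simp [h]⟩
    · exact ⟨1, by rw [h]; norm_num⟩
  choose k hk using this
  refine ⟨∑ i, k i, ?_⟩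
  simp [hk, Finset.sum_sub_distrib, Finset.mul_sum]

lemma rows_orth (n : ℕ) (hn : 8 ≤ n) (H : Fin n → Fin (n - 1) → ℚ)
    (hpm : ∀ i j, H i j = 1 ∨ H i j = -1)
    (hbal : ∀ j, ∑ i : Fin n, H i j = 0)
    (horth : ∀ j k : Fin (n - 1), j ≠ k → ∑ i : Fin n, H i j * H i k = 0)
    (r s : Fin n) (hrs : r ≠ s) : ∑ j, H r j * H s j = -1 := by
  let A : Matrix (Fin n) (Option (Fin (n - 1))) ℚ := fun i o => o.elim 1 (H i)
  have hn0 : (n : ℚ) ≠ 0 := by positivity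
  have h1 : ((n : ℚ)⁻¹ • A.transpose) * A = 1 := by
    ext i j
    rw [Matrix.smul_mul, Matrix.smul_apply, Matrix.mul_apply]
    simp only [Matrix.transpose_apply]
    rcases i with _ | i <;> rcases j with _ | j
    · simp [A, hn0]
    · simp [A, hbal]
    · simp [A, hbal]
    · by_cases h : i = j
      · subst h; simp [A, pm_sq (hpm _ i), hn0]
      · simp [A, horth i j h, h]
  have e : Option (Fin (n - 1)) ≃ Fin n := Fintype.equivOfCardEq (by simp; omega)
  have h2 := (Matrix.mul_eq_one_comm_of_equiv e).1 h1
  have h3 := congrFun (congrFun h2 r) s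
  rw [Matrix.mul_smul, Matrix.smul_apply, Matrix.mul_apply, Matrix.one_apply_ne hrs] at h3
  simp only [Matrix.transpose_apply] at h3
  simp [A, Fintype.sum_option, hn0] at h3
  linarith

/-- Deleting two distinct fixed columns from a saturated `OA(n, n-1, 2, 2)`
gives `H'` with `n-3` columns; augmenting `H'` with all its two-column interactions
yields an `n × ((n-3)(n-2)/2)` design `X` with `E(s²)(X) = n²(n-5)/((n-3)(n-1))`, which
is `E(s²)`-optimal among all balanced `n × ((n-3)(n-2)/2)` two-level designs. -/
theorem Es2_optimal_full_delete_two (n : ℕ) (hn : 8 ≤ n) (h4 : 4 ∣ n)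
    (H : Fin n → Fin (n - 1) → ℚ)
    (hpm : ∀ i j, H i j = 1 ∨ H i j = -1)
    (hbal : ∀ j, ∑ i : Fin n, H i j = 0)
    (horth : ∀ j k : Fin (n - 1), j ≠ k → ∑ i : Fin n, H i j * H i k = 0)
    (a b : Fin (n - 1)) (hab : a ≠ b)
    (X : Fin n → ({j : Fin (n - 1) // j ≠ a ∧ j ≠ b} ⊕
      {p : {j : Fin (n - 1) // j ≠ a ∧ j ≠ b} × {j : Fin (n - 1) // j ≠ a ∧ j ≠ b} //
        p.1.1 < p.2.1}) → ℚ)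
    (hX : ∀ r, X r = Sum.elim (fun j => H r j.1) (fun p => H r p.1.1.1 * H r p.1.2.1)) :
    Es2 X = (n : ℚ) ^ 2 * ((n : ℚ) - 5) / (((n : ℚ) - 3) * ((n : ℚ) - 1)) ∧
      ∀ Y : Fin n → Fin ((n - 3) * (n - 2) / 2) → ℚ,
        (∀ i j, Y i j = 1 ∨ Y i j = -1) → (∀ j, ∑ i : Fin n, Y i j = 0) →
          Es2 X ≤ Es2 Y := by
  classical
  obtain ⟨q, hq⟩ := h4
  have hnq : (n : ℚ) = 4 * q := by rw [hq]; push_cast; ring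
  have hn8 : (8 : ℚ) ≤ n := by exact_mod_cast hn
  -- sums over the remaining columns
  have hdel : ∀ F : Fin (n - 1) → ℚ,
      ∑ j : {j : Fin (n - 1) // j ≠ a ∧ j ≠ b}, F j.1 = ∑ j, F j - F a - F b := by
    intro F
    rw [← Finset.sum_subtype ((Finset.univ.erase a).erase b) (fun p => by simp [and_comm]) F]
    have e1 := Finset.add_sum_erase Finset.univ F (Finset.mem_univ a)
    have e2 := Finset.add_sum_erase (Finset.univ.erase a) F (a := b) (by simp [hab.symm])
    linarith
  have hrow : ∀ r s, 2 * ∑ i, X r i * X s i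
      = 2 * (∑ j, H r j * H s j - H r a * H s a - H r b * H s b)
        + (∑ j, H r j * H s j - H r a * H s a - H r b * H s b) ^ 2 - (n - 3) := by
    intro r s
    have hp := pair_sum_aux (fun j : {j : Fin (n - 1) // j ≠ a ∧ j ≠ b} => j.1)
      Subtype.val_injective (fun j => H r j.1 * H s j.1)
    have hs : ∑ j : {j : Fin (n - 1) // j ≠ a ∧ j ≠ b}, (H r j.1 * H s j.1) ^ 2 = n - 3 := by
      rw [hdel (fun j => (H r j * H s j) ^ 2)]
      have : ∀ j, (H r j * H s j) ^ 2 = 1 := fun j => by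
        have := pm_sq (hpm r j); have := pm_sq (hpm s j); grind
      simp only [this]
      simp
      rw [Nat.cast_sub (by omega)]; push_cast; ring
    rw [hs, hdel (fun j => H r j * H s j)] at hp
    rw [Fintype.sum_sum_type]
    simp only [hX, Sum.elim_inl, Sum.elim_inr]
    rw [hdel (fun j => H r j * H s j), mul_add, add_sub_assoc, ← hp]
    congr 2
    refine Finset.sum_congr rfl fun p _ => by ring
  have hXpm : ∀ r i, X r i = 1 ∨ X r i = -1 := by
    intro r i
    rw [hX]
    rcases i with j | p
    · exact hpm _ _
    · simp only [Sum.elim_inr]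
      rcases hpm r p.1.1.1 with h | h <;> rcases hpm r p.1.2.1 with h' | h' <;> simp [h, h']
  have hXb : ∀ i, ∑ r, X r i = 0 := by
    intro i
    simp only [hX]
    rcases i with j | p
    · exact hbal _
    · exact horth _ _ (ne_of_lt p.2)
  have hcard : (Fintype.card ({j : Fin (n - 1) // j ≠ a ∧ j ≠ b} ⊕
      {p : {j : Fin (n - 1) // j ≠ a ∧ j ≠ b} × {j : Fin (n - 1) // j ≠ a ∧ j ≠ b} //
        p.1.1 < p.2.1}) : ℚ) = (n - 3) * (n - 2) / 2 := by
    have h := hrow ⟨0, by omega⟩ ⟨0, by omega⟩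
    simp only [pm_sq (hXpm _ _), pm_sq (hpm _ _)] at h
    simp only [Finset.sum_const, Finset.card_univ, Fintype.card_fin, nsmul_eq_mul, mul_one] at h
    rw [Nat.cast_sub (by omega)] at h
    push_cast at h
    linarith
  have hoff : ∀ r s, r ≠ s → (∑ i, X r i * X s i + ((n : ℚ) - 4) / 2) ^ 2 = 1 := by
    intro r s hrs
    have h := hrow r s
    rw [rows_orth n hn H hpm hbal horth r s hrs] at h
    have h' : ∑ i, X r i * X s i = (2 * (-1 - H r a * H s a - H r b * H s b)
        + (-1 - H r a * H s a - H r b * H s b) ^ 2 - (n - 3)) / 2 := by linarith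
    rw [h']
    rcases hpm r a with h1 | h1 <;> rcases hpm s a with h2 | h2 <;>
    rcases hpm r b with h3 | h3 <;> rcases hpm s b with h4 | h4 <;>
    rw [h1, h2, h3, h4] <;> ring
  have hnumX := Es2_num X hXpm hXb (((n : ℚ) - 4) / 2)
  have hone : (∑ r : Fin n, ∑ s : Fin n,
      if r ≠ s then (∑ i, X r i * X s i + ((n : ℚ) - 4) / 2) ^ 2 else 0)
      = ∑ r : Fin n, ∑ s : Fin n, if r ≠ s then (1 : ℚ) else 0 := by
    refine Finset.sum_congr rfl fun r _ => Finset.sum_congr rfl fun s _ => ?_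
    by_cases h : r = s
    · simp [h]
    · rw [if_pos h, if_pos h, hoff r s h]
  rw [hone] at hnumX
  constructor
  · unfold Es2
    rw [hnumX, off_sum, hcard]
    simp only [Finset.sum_const, Finset.card_univ, Fintype.card_fin, nsmul_eq_mul, mul_one]
    have d1 : (n : ℚ) - 3 ≠ 0 := by linarith
    have d2 : (n : ℚ) - 1 ≠ 0 := by linarith
    have d3 : (n : ℚ) - 2 ≠ 0 := by linarith
    have d4 : (n : ℚ) - 4 ≠ 0 := by linarith
    have d5 : ((n : ℚ) - 3) * (n - 2) / 2 - 1 = (n - 1) * (n - 4) / 2 := by ring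
    rw [d5]
    field_simp
    ring
  · intro Y hY hYb
    have hm : (n - 3) * (n - 2) / 2 = (4 * q - 3) * (2 * q - 1) := by
      have : n - 2 = 2 * (2 * q - 1) := by omega
      rw [this, hq, show (4 * q - 3) * (2 * (2 * q - 1)) = 2 * ((4 * q - 3) * (2 * q - 1)) by ring]
      simp
    have hcY : (Fintype.card (Fin ((n - 3) * (n - 2) / 2)) : ℚ) = (n - 3) * (n - 2) / 2 := by
      rw [Fintype.card_fin, hm, Nat.cast_mul, Nat.cast_sub (by omega), Nat.cast_sub (by omega), hnq]
      push_cast; ring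
    have hnumY := Es2_num Y hY hYb (((n : ℚ) - 4) / 2)
    unfold Es2
    rw [hnumX, hnumY, hcard, hcY]
    refine div_le_div_of_nonneg_right ?_ ?_
    · gcongr with r _ s _
      split_ifs with h
      · obtain ⟨k, hk⟩ := odd_row (fun i => Y r i * Y s i) (fun i => by
          rcases hY r i with h | h <;> rcases hY s i with h' | h' <;> simp [h, h'])
        rw [hk, hcY, hnq]
        have : (4 * (q : ℚ) - 3) * (4 * q - 2) / 2 - 2 * k + (4 * q - 4) / 2
            = ((2 * (4 * (q : ℤ) ^ 2 - 4 * q - k) + 1 : ℤ) : ℚ) := by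
          push_cast; ring
        rw [this]
        have h0 : (2 * (4 * (q : ℤ) ^ 2 - 4 * q - k) + 1) ≠ 0 := by omega
        have : (1 : ℤ) ≤ (2 * (4 * (q : ℤ) ^ 2 - 4 * q - k) + 1) ^ 2 := by
          have := pow_pos (abs_pos.2 h0) 2
          rw [sq_abs] at this
          omega
        exact_mod_cast this
      · exact le_rfl
    · have e : ((n : ℚ) - 3) * (n - 2) / 2 - 1 = (n - 1) * (n - 4) / 2 := by ring
      rw [e]
      have d1 : (0 : ℚ) ≤ (n : ℚ) - 3 := by linarith
      have d2 : (0 : ℚ) ≤ (n : ℚ) - 1 := by linarith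
      have d3 : (0 : ℚ) ≤ (n : ℚ) - 2 := by linarith
      have d4 : (0 : ℚ) ≤ (n : ℚ) - 4 := by linarith
      positivity
end
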